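/- Let T be the bounded linear operator on ℓ²(ℤ, ℂ) determined on the canonical orthonormal basis (e_n)_{n∈ℤ} by T e_n = ω_n e_{n−1}, where ω_n = (n+2)/(n+1) if n ≥ 0 and ω_n = (|n|−1)/|n| if n < 0. Then T is not norm-unimodal. -/

import Mathlib

open Filter Topology MeasureTheory
open scoped Classical ENNReal

noncomputable def distFreq {X : Type*} [MetricSpace X] (f : X → X) (x y : X) (τ : ℝ) (n : ℕ) : ℝ :=
  (((Finset.range n).filter fun i => dist (f^[i] x) (f^[i] y) < τ).card : ℝ) / n

def DistributionallyChaoticPair {X : Type*} [MetricSpace X] (f : X → X) (x y : X) : Prop :=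
  (∀ τ : ℝ, 0 < τ → Filter.limsup (distFreq f x y τ) Filter.atTop = 1) ∧
  (∃ ε : ℝ, 0 < ε ∧ Filter.liminf (distFreq f x y ε) Filter.atTop = 0)

def DistributionallyChaotic {X : Type*} [MetricSpace X] (f : X → X) : Prop :=
  ∃ Λ : Set X, ¬Λ.Countable ∧
    ∀ x ∈ Λ, ∀ y ∈ Λ, x ≠ y → DistributionallyChaoticPair f x y

def LiYorkePair {X : Type*} [MetricSpace X] (f : X → X) (x y : X) : Prop :=
  0 < Filter.limsup (fun n => edist (f^[n] x) (f^[n] y)) Filter.atTop ∧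
  Filter.liminf (fun n => edist (f^[n] x) (f^[n] y)) Filter.atTop = 0

def LiYorkeChaotic {X : Type*} [MetricSpace X] (f : X → X) : Prop :=
  ∃ Γ : Set X, ¬Γ.Countable ∧ ∀ x ∈ Γ, ∀ y ∈ Γ, x ≠ y → LiYorkePair f x y

def NormUnimodal {X : Type*} [NormedAddCommGroup X] [NormedSpace ℂ X] (T : X →L[ℂ] X) : Prop :=
  ∃ r : ℝ, 1 < r ∧ ∀ m : ℕ, ∃ x : X, x ≠ 0 ∧
    Filter.Tendsto (fun k => ‖(T ^ k) x‖) Filter.atTop (nhds 0) ∧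
    ∀ i : ℕ, 1 ≤ i → i ≤ m → r ^ i * ‖x‖ ≤ ‖(T ^ i) x‖

/-!
A norm-unimodal operator satisfies `rᵏ ≤ ‖Tᵏ‖` for some `r > 1` and all `k ≥ 1`, so the norms of
its powers cannot grow polynomially. For a weighted backward shift, `‖Tᵏ‖` is at most the supremum
of the moduli of the products of `k` consecutive weights. If `‖wₙ‖ ≤ cₙ₊₁ / cₙ` for a positive
sequence `c`, such a product telescopes to at most `cₙ₊ₖ / cₙ`. Here `cₙ = max (n + 1) 1` handles
positive and negative `n` at once, and `cₙ₊ₖ / cₙ ≤ k + 1`.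
-/

theorem NormUnimodal.exists_pow_le_norm_pow {X : Type*} [NormedAddCommGroup X] [NormedSpace ℂ X]
    {T : X →L[ℂ] X} (hT : NormUnimodal T) : ∃ r : ℝ, 1 < r ∧ ∀ k ≠ 0, r ^ k ≤ ‖T ^ k‖ := by
  obtain ⟨r, hr, h⟩ := hT
  refine ⟨r, hr, fun k hk => ?_⟩
  obtain ⟨x, hx, -, hgrowth⟩ := h k
  have hle : r ^ k * ‖x‖ ≤ ‖T ^ k‖ * ‖x‖ :=
    (hgrowth k (Nat.one_le_iff_ne_zero.mpr hk) le_rfl).trans ((T ^ k).le_opNorm x)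
  exact le_of_mul_le_mul_right hle (norm_pos_iff.mpr hx)

theorem not_normUnimodal_of_isBigO_pow {X : Type*} [NormedAddCommGroup X] [NormedSpace ℂ X]
    {T : X →L[ℂ] X} {d : ℕ} (hT : (fun k : ℕ => ‖T ^ k‖) =O[atTop] fun k => (k : ℝ) ^ d) :
    ¬ NormUnimodal T := by
  intro hunimodal
  obtain ⟨r, hr, hpow⟩ := hunimodal.exists_pow_le_norm_pow
  have hr₀ : 0 < r := one_pos.trans hr
  have hlower : (fun k : ℕ => r ^ k) =O[atTop] fun k : ℕ => ‖T ^ k‖ :=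
    .of_norm_eventuallyLE <| (eventually_ne_atTop 0).mono fun k hk => by
      simpa only [Real.norm_of_nonneg (pow_nonneg hr₀.le k)] using hpow k hk
  have hself : (fun k : ℕ => r ^ k) =o[atTop] fun k : ℕ => r ^ k :=
    (hlower.trans hT).trans_isLittleO (isLittleO_pow_const_const_pow_of_one_lt d hr)
  exact Asymptotics.isLittleO_irrefl (.of_forall fun k => (pow_pos hr₀ k).ne') hself

theorem lp_norm_le_mul_norm_of_injective {α β : Type*} {E : α → Type*} {F : β → Type*}
    [∀ a, NormedAddCommGroup (E a)] [∀ b, NormedAddCommGroup (F b)] {p : ℝ≥0∞}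
    (hp : 0 < p.toReal) {e : α → β} (he : Function.Injective e) {C : ℝ} (hC : 0 ≤ C)
    {y : lp E p} {x : lp F p} (h : ∀ a, ‖y a‖ ≤ C * ‖x (e a)‖) : ‖y‖ ≤ C * ‖x‖ := by
  have hx : 0 ≤ ‖x‖ := lp.norm_nonneg' x
  refine lp.norm_le_of_forall_sum_le hp (mul_nonneg hC hx) fun s => ?_
  calc ∑ a ∈ s, ‖y a‖ ^ p.toReal
      ≤ ∑ a ∈ s, C ^ p.toReal * ‖x (e a)‖ ^ p.toReal := by
        gcongr with a
        rw [← Real.mul_rpow hC (norm_nonneg _)]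
        gcongr
        exact h a
    _ = C ^ p.toReal * ∑ b ∈ s.map ⟨e, he⟩, ‖x b‖ ^ p.toReal := by
        rw [Finset.sum_map, Finset.mul_sum, Function.Embedding.coeFn_mk]
    _ ≤ C ^ p.toReal * ‖x‖ ^ p.toReal := by
        gcongr
        exact lp.sum_rpow_le_norm_rpow hp x _
    _ = (C * ‖x‖) ^ p.toReal := (Real.mul_rpow hC hx).symm

theorem norm_prod_range_le_div {𝕜 : Type*} [NormedField 𝕜] {w : ℤ → 𝕜} {c : ℤ → ℝ}
    (hc : ∀ n, 0 < c n) (hw : ∀ n, ‖w n‖ ≤ c (n + 1) / c n) (n : ℤ) (k : ℕ) :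
    ‖∏ i ∈ Finset.range k, w (n + i)‖ ≤ c (n + k) / c n := by
  induction k with
  | zero => simp [div_self (hc n).ne']
  | succ k ih =>
    calc ‖∏ i ∈ Finset.range (k + 1), w (n + i)‖
        = ‖∏ i ∈ Finset.range k, w (n + i)‖ * ‖w (n + k)‖ := by
          rw [Finset.prod_range_succ, norm_mul]
      _ ≤ c (n + k) / c n * (c (n + k + 1) / c (n + k)) := by
          gcongr
          · exact div_nonneg (hc _).le (hc _).le
          · exact hw _
      _ = c (n + (k + 1 : ℕ)) / c n := by
          rw [Nat.cast_succ, ← add_assoc, mul_comm, div_mul_div_cancel₀ (hc _).ne']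

theorem le_max_add_one_add_one_div_max_add_one {a t : ℝ} (hnonneg : 0 ≤ t → a ≤ (t + 2) / (t + 1))
    (hneg : t < 0 → a ≤ 1) : a ≤ max (t + 1 + 1) 1 / max (t + 1) 1 := by
  rcases le_or_gt 0 t with ht | ht
  · rw [max_eq_left (by linarith), max_eq_left (by linarith), add_assoc t, one_add_one_eq_two]
    exact hnonneg ht
  · rw [max_eq_right (by linarith : t + 1 ≤ 1), div_one]
    exact (hneg ht).trans (le_max_right _ _)

theorem max_add_natCast_one_div_le (t : ℝ) (k : ℕ) : max (t + k) 1 / max t 1 ≤ k + 1 := by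
  have hk : (k : ℝ) ≤ k * max t 1 := le_mul_of_one_le_right k.cast_nonneg (le_max_right _ _)
  rw [div_le_iff₀ (by positivity), add_one_mul]
  refine max_le ?_ ?_
  · linarith [le_max_left t 1]
  · linarith [le_max_right t 1, k.cast_nonneg (α := ℝ)]

section WeightedBackwardShift

variable {𝕜 : Type*} [NontriviallyNormedField 𝕜] {p : ℝ≥0∞} [Fact (1 ≤ p)]
  {T : lp (fun _ : ℤ => 𝕜) p →L[𝕜] lp (fun _ : ℤ => 𝕜) p} {w : ℤ → 𝕜}

/-- `T` acts on the canonical basis of `ℓᵖ(ℤ)` as the backward shift with weights `w`, that is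
`T eₙ = wₙ eₙ₋₁`. For `p < ∞` this determines `T`. -/
def IsWeightedBackwardShift (T : lp (fun _ : ℤ => 𝕜) p →L[𝕜] lp (fun _ : ℤ => 𝕜) p)
    (w : ℤ → 𝕜) : Prop :=
  ∀ n : ℤ, T (lp.single p n (1 : 𝕜)) = w n • lp.single p (n - 1) (1 : 𝕜)

namespace IsWeightedBackwardShift

theorem apply_single (hT : IsWeightedBackwardShift T w) (n : ℤ) (a : 𝕜) :
    T (lp.single p n a) = lp.single p (n - 1) (w n * a) := by
  have hsmul (m : ℤ) (b : 𝕜) : lp.single p m b = b • lp.single (E := fun _ : ℤ => 𝕜) p m 1 := by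
    rw [← lp.single_smul, smul_eq_mul, mul_one]
  rw [hsmul n a, map_smul, hT n, smul_smul, mul_comm, ← hsmul]

theorem apply_coord (hT : IsWeightedBackwardShift T w) (hp : p ≠ ⊤)
    (x : lp (fun _ : ℤ => 𝕜) p) (j : ℤ) : T x j = w (j + 1) * x (j + 1) := by
  have hsum : HasSum (fun n => T (lp.single p n (x n)) j) (T x j) :=
    ((lp.hasSum_single hp x).mapL T).mapL (lp.evalCLM 𝕜 (fun _ : ℤ => 𝕜) p j)
  simp only [hT.apply_single] at hsum
  have hother (n : ℤ) (hn : n ≠ j + 1) :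
      lp.single (E := fun _ : ℤ => 𝕜) p (n - 1) (w n * x n) j = 0 :=
    lp.single_apply_ne p _ _ (by omega)
  simpa using hsum.unique (hasSum_single (j + 1) hother)

theorem pow_apply_coord (hT : IsWeightedBackwardShift T w) (hp : p ≠ ⊤) (k : ℕ)
    (x : lp (fun _ : ℤ => 𝕜) p) (j : ℤ) :
    (T ^ k) x j = (∏ i ∈ Finset.range k, w (j + 1 + i)) * x (j + k) := by
  induction k generalizing x with
  | zero => simp
  | succ k ih =>
    rw [pow_succ, mul_apply_eq_comp, ih, hT.apply_coord hp, Finset.prod_range_succ,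
      add_right_comm j 1 (k : ℤ), Nat.cast_succ, add_assoc j, mul_assoc]

theorem norm_pow_le (hT : IsWeightedBackwardShift T w) (hp : p ≠ ⊤) {k : ℕ} {C : ℝ}
    (hC : ∀ n : ℤ, ‖∏ i ∈ Finset.range k, w (n + i)‖ ≤ C) : ‖T ^ k‖ ≤ C := by
  have hC₀ : 0 ≤ C := (norm_nonneg _).trans (hC 0)
  have hp₀ : 0 < p.toReal := ENNReal.toReal_pos (one_pos.trans_le Fact.out).ne' hp
  refine (T ^ k).opNorm_le_bound hC₀ fun x =>
    lp_norm_le_mul_norm_of_injective hp₀ (add_left_injective (k : ℤ)) hC₀ fun j => ?_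
  rw [hT.pow_apply_coord hp, norm_mul]
  gcongr
  exact hC (j + 1)

theorem norm_pow_le_natCast_add_one (hT : IsWeightedBackwardShift T w) (hp : p ≠ ⊤)
    (hw_nonneg : ∀ n : ℤ, 0 ≤ n → ‖w n‖ ≤ ((n : ℝ) + 2) / ((n : ℝ) + 1))
    (hw_neg : ∀ n : ℤ, n < 0 → ‖w n‖ ≤ 1) (k : ℕ) : ‖T ^ k‖ ≤ k + 1 := by
  let c (n : ℤ) : ℝ := max ((n : ℝ) + 1) 1
  have hc (n : ℤ) : 0 < c n := one_pos.trans_le (le_max_right _ _)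
  have hwc (n : ℤ) : ‖w n‖ ≤ c (n + 1) / c n := by
    simpa only [c, Int.cast_add, Int.cast_one] using
      le_max_add_one_add_one_div_max_add_one (fun hn => hw_nonneg n (by exact_mod_cast hn))
        (fun hn => hw_neg n (by exact_mod_cast hn))
  refine hT.norm_pow_le hp fun n => ?_
  calc ‖∏ i ∈ Finset.range k, w (n + i)‖
      ≤ c (n + k) / c n := norm_prod_range_le_div hc hwc n k
    _ ≤ k + 1 := by
        simpa only [c, Int.cast_add, Int.cast_natCast, add_right_comm] using
          max_add_natCast_one_div_le ((n : ℝ) + 1) k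

end IsWeightedBackwardShift

end WeightedBackwardShift

theorem natCast_add_one_isBigO_natCast :
    (fun k : ℕ => (k : ℝ) + 1) =O[atTop] fun k : ℕ => (k : ℝ) :=
  (Asymptotics.isBigO_refl _ _).add
    ((Asymptotics.isLittleO_const_id_atTop (1 : ℝ)).isBigO.comp_tendsto tendsto_natCast_atTop_atTop)

theorem abs_sub_one_div_self_le_one {t : ℝ} (ht : 1 ≤ t) : |(t - 1) / t| ≤ 1 := by
  rw [abs_of_nonneg (div_nonneg (by linarith) (by linarith))]
  exact div_le_one_of_le₀ (by linarith) (by linarith)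

theorem stmt_7_general {p : ℝ≥0∞} [Fact (1 ≤ p)] (hp : p ≠ ⊤)
    {T : lp (fun _ : ℤ => ℂ) p →L[ℂ] lp (fun _ : ℤ => ℂ) p} {w : ℤ → ℂ}
    (hT : IsWeightedBackwardShift T w)
    (hw_nonneg : ∀ n : ℤ, 0 ≤ n → ‖w n‖ ≤ ((n : ℝ) + 2) / ((n : ℝ) + 1))
    (hw_neg : ∀ n : ℤ, n < 0 → ‖w n‖ ≤ 1) : ¬ NormUnimodal T := by
  have hlinear : (fun k : ℕ => ‖T ^ k‖) =O[atTop] fun k : ℕ => (k : ℝ) + 1 :=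
    .of_norm_le fun k => by
      simpa only [norm_norm] using hT.norm_pow_le_natCast_add_one hp hw_nonneg hw_neg k
  refine not_normUnimodal_of_isBigO_pow (d := 1) ?_
  simpa only [pow_one] using hlinear.trans natCast_add_one_isBigO_natCast

/-- The bilateral weighted backward shift with weights
ω_n = (n+2)/(n+1) for n ≥ 0 and ω_n = (|n|-1)/|n| for n < 0 is
not norm-unimodal. -/
theorem stmt_7 (T : lp (fun _ : ℤ => ℂ) 2 →L[ℂ] lp (fun _ : ℤ => ℂ) 2)
    (ω : ℤ → ℝ)
    (hω : ∀ n : ℤ, ω n = if 0 ≤ n then (((n : ℝ) + 2) / ((n : ℝ) + 1))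
      else (((|n| : ℤ) : ℝ) - 1) / ((|n| : ℤ) : ℝ))
    (hT : ∀ n : ℤ, T (lp.single 2 n (1 : ℂ)) = ((ω n : ℝ) : ℂ) • lp.single 2 (n - 1) (1 : ℂ)) :
    ¬ NormUnimodal T := by
  refine stmt_7_general ENNReal.ofNat_ne_top hT (fun n hn => ?_) (fun n hn => ?_)
  · lift n to ℕ using hn
    rw [Complex.norm_real, hω, if_pos n.cast_nonneg, Real.norm_of_nonneg (by positivity)]
  · rw [Complex.norm_real, hω, if_neg hn.not_ge]
    exact abs_sub_one_div_self_le_one (by exact_mod_cast Int.one_le_abs hn.ne)
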